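/- Let (X, d) be a proper, uniquely geodesic, straight metric space with basepoint b, and let γ be a geodesic ray based at b. The following three statements are equivalent: (1) the map D_b → C(X, ℝ) sending a ray γ' to its Busemann point B_{γ'} is continuous at γ; (2) the fiber Π_b^{-1}(γ) equals the singleton {B_γ}; (3) the Busemann map B : X̄_b → C(X, ℝ) (defined by B(x) = h(x) for x ∈ X and B of the boundary point of γ' equal to B_{γ'}) is continuous at the boundary point determined by γ. -/

import Mathlib

/-!
The compactness behind everything is Arzelà–Ascoli (`isCompact_lipschitz`): the `1`-Lipschitz maps
from a metric space to a proper one, with one value prescribed, form a compact set. It applies both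
to horofunctions (normalised to vanish at `b`) and to geodesic lines through `b`.

*Singleton fiber implies continuity on the compactification.* Whenever `t ≤ r ≤ ∞`, the function
`B (γ', r)` takes the value `-t` at `γ' t`. Hence any limit of `B (γ', r)` as `(γ', r) → (γ, ∞)` is
a horofunction for which `γ` is optimal, so it is `B_γ`; compactness turns this into convergence.
As the quotient map collapses nothing near `(γ, ∞)`, this is continuity of `B`.

*Continuity on the compactification implies continuity on rays*: restrict `B` to the boundary.

*Continuity on rays implies singleton fiber.* Let `γ` be optimal for `ξ = lim h(x)`, the limit being
taken along an ultrafilter of points `x`, which leaves every bounded set since `ξ ∉ h(X)`. Let `g_x`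
be a geodesic line with `g_x 0 = b` passing through `x`. The lines `g_x` converge to a line `g` with
`ξ (g t) = -t` for *all* real `t`. Following `g` up to time `0` and `γ` afterwards is a geodesic,
because `ξ` is `1`-Lipschitz and has slope `-1` along it; by straightness it equals `g`
(`eq_of_optimal`). So the rays of `g_x` converge to `γ`. Since `t ↦ d(γ' t, p) - t` is antitone, the
Busemann point of the ray of `g_x` is at most `h(x)`, and in the limit `B_γ ≤ ξ`. Conversely
`ξ p ≤ d(γ t, p) + ξ (γ t) = d(γ t, p) - t` gives `ξ ≤ B_γ`.
-/

open Filter Topology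
open scoped NNReal ENNReal

variable {X : Type*} [MetricSpace X]

/-- `γ` restricted to the set `s ⊆ ℝ` is a (unit-speed) geodesic:
`dist (γ u) (γ v) = |u - v|` for all `u, v ∈ s`. -/
def IsGeodesicOn (γ : ℝ → X) (s : Set ℝ) : Prop :=
  ∀ u ∈ s, ∀ v ∈ s, dist (γ u) (γ v) = |u - v|

/-- `X` is uniquely geodesic: any two distinct points are joined by a geodesic
parametrized on `[0, dist a c]`, and any two such geodesics agree on that interval. -/
def UniquelyGeodesic (X : Type*) [MetricSpace X] : Prop :=
  ∀ a c : X, a ≠ c →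
    ∃ γ : ℝ → X,
      (IsGeodesicOn γ (Set.Icc 0 (dist a c)) ∧ γ 0 = a ∧ γ (dist a c) = c) ∧
        ∀ γ' : ℝ → X,
          (IsGeodesicOn γ' (Set.Icc 0 (dist a c)) ∧ γ' 0 = a ∧ γ' (dist a c) = c) →
            Set.EqOn γ' γ (Set.Icc 0 (dist a c))

/-- `X` is straight: every geodesic defined on a nondegenerate closed interval extends to a
unique bi-infinite geodesic (an isometric embedding of `ℝ`). -/
def Straight (X : Type*) [MetricSpace X] : Prop :=
  ∀ (γ : ℝ → X) (a c : ℝ), a < c → IsGeodesicOn γ (Set.Icc a c) →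
    ∃! γ' : ℝ → X, Isometry γ' ∧ Set.EqOn γ' γ (Set.Icc a c)

/-- The space `D_b` of geodesic rays based at `b`, as a subspace of `C(ℝ≥0, X)`
(with the compact-open topology, i.e. uniform convergence on compact sets). -/
abbrev GeodesicRay (X : Type*) [MetricSpace X] (b : X) :=
  {γ : C(ℝ≥0, X) // Isometry ⇑γ ∧ γ 0 = b}

/-- The horofunction embedding `h : X → C(X, ℝ)`, `h x y = d(x, y) - d(x, b)`. -/
noncomputable def horo (b x : X) : C(X, ℝ) :=
  ⟨fun y => dist x y - dist x b,
    (continuous_const.dist continuous_id).sub continuous_const⟩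

/-- The horoboundary of `X` (with basepoint `b`): the closure of `h(X)` in `C(X, ℝ)`
minus `h(X)`. -/
def horoboundary (b : X) : Set C(X, ℝ) :=
  closure (Set.range (horo b)) \ Set.range (horo b)

/-- The setoid on `D_b × M` identifying all points whose second coordinate is `0`. -/
def collapseSetoid (X : Type*) [MetricSpace X] (b : X) (M : Type*) [Zero M] :
    Setoid (GeodesicRay X b × M) where
  r p q := p = q ∨ (p.2 = 0 ∧ q.2 = 0)
  iseqv := by
    refine ⟨fun _ => Or.inl rfl, ?_, ?_⟩
    · rintro p q (rfl | ⟨h1, h2⟩)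
      · exact Or.inl rfl
      · exact Or.inr ⟨h2, h1⟩
    · rintro p q r (rfl | ⟨h1, h2⟩) (rfl | ⟨h3, h4⟩)
      · exact Or.inl rfl
      · exact Or.inr ⟨h3, h4⟩
      · exact Or.inr ⟨h1, h2⟩
      · exact Or.inr ⟨h1, h4⟩

/-- The visual compactification `X̄_b = (D_b × [0, ∞]) / (D_b × {0})`. -/
abbrev VisualCompactification (X : Type*) [MetricSpace X] (b : X) :=
  Quotient (collapseSetoid X b ℝ≥0∞)

/-- `X` is C¹ along geodesics: for a bi-infinite geodesic `γ` and a point `p` off `γ`,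
`t ↦ d(γ t, p)` is differentiable, and the derivative depends continuously on `(t, p)`. -/
def C1AlongGeodesics (X : Type*) [MetricSpace X] : Prop :=
  ∀ γ : ℝ → X, Isometry γ →
    (∀ p, p ∉ Set.range γ → ∀ t : ℝ, DifferentiableAt ℝ (fun s => dist (γ s) p) t) ∧
      ContinuousOn (fun q : ℝ × X => deriv (fun s => dist (γ s) q.2) q.1)
        {q : ℝ × X | q.2 ∉ Set.range γ}

/-- `X` has constant distance variation: for distinct bi-infinite geodesics `γ, η` with
`γ 0 = η 0`, either `(d/dt) d(γ t, η s)|_{t=0}` exists for all `s > 0` and is independent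
of `s`, or it exists for no `s > 0`. -/
def ConstantDistanceVariation (X : Type*) [MetricSpace X] : Prop :=
  ∀ γ η : ℝ → X, Isometry γ → Isometry η → γ 0 = η 0 → γ ≠ η →
    ((∀ s : ℝ, 0 < s → DifferentiableAt ℝ (fun t => dist (γ t) (η s)) 0) ∧
        ∀ s s' : ℝ, 0 < s → 0 < s' →
          deriv (fun t => dist (γ t) (η s)) 0 = deriv (fun t => dist (γ t) (η s')) 0) ∨
      ∀ s : ℝ, 0 < s → ¬ DifferentiableAt ℝ (fun t => dist (γ t) (η s)) 0

/-! ### Compactness of pointed `1`-Lipschitz maps -/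

section Lipschitz

variable {E Y : Type*} [MetricSpace E] [MetricSpace Y]

/-- The `1`-Lipschitz maps sending `e` to `y`, inside `C(E, Y)` with the compact-open topology. -/
def pointedLipschitz (e : E) (y : Y) : Set C(E, Y) :=
  {f | LipschitzWith 1 f ∧ f e = y}

theorem tendsto_apply {ι : Type*} {l : Filter ι} {f : ι → C(E, Y)} {g : C(E, Y)}
    (h : Tendsto f l (𝓝 g)) (p : E) : Tendsto (fun i => f i p) l (𝓝 (g p)) :=
  ((continuous_eval_const (F := C(E, Y)) p).tendsto g).comp h

theorem isCompact_lipschitz [ProperSpace Y] (e : E) (y : Y) :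
    IsCompact (pointedLipschitz e y) := by
  apply ArzelaAscoli.isCompact_of_equicontinuous
  · have hK : IsCompact (Set.univ.pi fun p : E => Metric.closedBall y (dist p e)) :=
      isCompact_univ_pi fun p => isCompact_closedBall _ _
    have heq : ContinuousMap.toFun '' pointedLipschitz e y =
        {f : E → Y | LipschitzWith 1 f} ∩ {f | f e = y} := by
      ext f
      constructor
      · rintro ⟨g, hg, rfl⟩
        exact hg
      · rintro ⟨h1, h2⟩
        exact ⟨⟨f, h1.continuous⟩, ⟨h1, h2⟩, rfl⟩
    rw [heq]
    refine hK.of_isClosed_subset ?_ ?_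
    · refine IsClosed.inter ?_ (isClosed_eq (continuous_apply e) continuous_const)
      have : {f : E → Y | LipschitzWith 1 f} = ⋂ p, ⋂ q, {f | dist (f p) (f q) ≤ dist p q} := by
        ext f
        simp [lipschitzWith_iff_dist_le_mul]
      rw [this]
      exact isClosed_iInter fun p => isClosed_iInter fun q =>
        isClosed_le ((continuous_apply p).dist (continuous_apply q)) continuous_const
    · rintro f ⟨h1, h2⟩ p -
      have := h1.dist_le_mul p e
      rw [show f e = y from h2] at this
      simpa using this
  · refine Metric.equicontinuous_of_continuity_modulus (fun r => r) tendsto_id _ ?_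
    intro p q f
    simpa using f.2.1.dist_le_mul p q

/-- On pointed `1`-Lipschitz maps, pointwise convergence is locally uniform. -/
theorem tendsto_of_pointwise [ProperSpace Y] {ι : Type*} {l : Filter ι} {e : E} {y : Y}
    {f : ι → C(E, Y)} {g : C(E, Y)} (hf : ∀ i, f i ∈ pointedLipschitz e y)
    (h : ∀ p, Tendsto (fun i => f i p) l (𝓝 (g p))) : Tendsto f l (𝓝 g) := by
  rw [tendsto_iff_ultrafilter]
  intro F hF
  obtain ⟨k, -, hk⟩ := (isCompact_lipschitz e y).ultrafilter_le_nhds (F.map f)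
    (le_principal_iff.2 (Filter.mem_map.2 (Filter.univ_mem' hf)))
  have : k = g := by
    ext p
    exact tendsto_nhds_unique (tendsto_apply (show Tendsto f F (𝓝 k) from hk) p) ((h p).mono_left hF)
  exact this ▸ hk

end Lipschitz

/-! ### Horofunctions and Busemann points -/

theorem horo_mem (b x : X) : horo b x ∈ pointedLipschitz b (0 : ℝ) := by
  refine ⟨LipschitzWith.of_dist_le_mul fun p q => ?_, ?_⟩
  · simp only [horo, ContinuousMap.coe_mk, NNReal.coe_one, one_mul, Real.dist_eq]
    rw [show dist x p - dist x b - (dist x q - dist x b) = dist p x - dist q x by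
      rw [dist_comm x p, dist_comm x q]; ring]
    exact abs_dist_sub_le p q x
  · simp [horo]

theorem closure_horo_subset (b : X) :
    closure (Set.range (horo b)) ⊆ pointedLipschitz b (0 : ℝ) :=
  closure_minimal (by rintro _ ⟨x, rfl⟩; exact horo_mem b x) (isCompact_lipschitz b 0).isClosed

theorem continuous_horo (b : X) : Continuous (horo b) := by
  apply ContinuousMap.continuous_of_continuous_uncurry
  change Continuous fun q : X × X => dist q.1 q.2 - dist q.1 b
  fun_prop

/-- A function with value `-t` at `γ t` is unbounded below, unlike every `h(x)`. -/
theorem not_mem_range_horo {b : X} (γ : GeodesicRay X b) {ξ : C(X, ℝ)}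
    (h : ∀ t : ℝ≥0, ξ (γ.1 t) = -(t : ℝ)) : ξ ∉ Set.range (horo b) := by
  rintro ⟨x, rfl⟩
  have h1 := h (nndist x b + 1)
  have h2 : 0 ≤ dist x (γ.1 (nndist x b + 1)) := dist_nonneg
  simp only [horo, ContinuousMap.coe_mk, NNReal.coe_add, coe_nndist, NNReal.coe_one] at h1
  linarith

theorem ray_dist {b : X} (γ : GeodesicRay X b) (s t : ℝ≥0) :
    dist (γ.1 s) (γ.1 t) = |(s : ℝ) - t| := by
  rw [γ.2.1.dist_eq, NNReal.dist_eq]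

theorem ray_dist_base {b : X} (γ : GeodesicRay X b) (s : ℝ≥0) :
    dist (γ.1 s) b = s := by
  have := ray_dist γ s 0
  rw [γ.2.2] at this
  simpa using this

theorem horo_ray {b : X} (γ : GeodesicRay X b) {s t : ℝ≥0} (h : t ≤ s) :
    horo b (γ.1 s) (γ.1 t) = -(t : ℝ) := by
  have h' : (t : ℝ) ≤ s := h
  simp only [horo, ContinuousMap.coe_mk, ray_dist, ray_dist_base]
  rw [abs_of_nonneg (by linarith)]
  ring

theorem tendsto_horo_ray [ProperSpace X] {b : X} {γ : GeodesicRay X b} {β : C(X, ℝ)}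
    (hβ : ∀ p : X, Tendsto (fun t : ℝ≥0 => dist (γ.1 t) p - (t : ℝ)) atTop (𝓝 (β p))) :
    Tendsto (fun t : ℝ≥0 => horo b (γ.1 t)) atTop (𝓝 β) := by
  refine tendsto_of_pointwise (fun t => horo_mem b _) fun p => ?_
  simpa only [horo, ContinuousMap.coe_mk, ray_dist_base] using hβ p

theorem busemann_mem_closure [ProperSpace X] {b : X} {γ : GeodesicRay X b} {β : C(X, ℝ)}
    (hβ : ∀ p : X, Tendsto (fun t : ℝ≥0 => dist (γ.1 t) p - (t : ℝ)) atTop (𝓝 (β p))) :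
    β ∈ closure (Set.range (horo b)) :=
  mem_closure_of_tendsto (tendsto_horo_ray hβ) (Eventually.of_forall fun _ => ⟨_, rfl⟩)

theorem busemann_ray {b : X} {γ : GeodesicRay X b} {β : C(X, ℝ)}
    (hβ : ∀ p : X, Tendsto (fun t : ℝ≥0 => dist (γ.1 t) p - (t : ℝ)) atTop (𝓝 (β p)))
    (t : ℝ≥0) : β (γ.1 t) = -(t : ℝ) := by
  refine tendsto_nhds_unique (hβ (γ.1 t)) (tendsto_const_nhds.congr' ?_)
  filter_upwards [eventually_ge_atTop t] with s hs
  have := horo_ray γ hs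
  simp only [horo, ContinuousMap.coe_mk, ray_dist_base] at this
  exact this.symm

/-- The Busemann point of a ray lies below `h(x)` for every `x` on the ray, because
`t ↦ d(γ t, p) - t` is antitone. -/
theorem busemann_le_horo {b : X} {γ : GeodesicRay X b} {β : C(X, ℝ)}
    (hβ : ∀ p : X, Tendsto (fun t : ℝ≥0 => dist (γ.1 t) p - (t : ℝ)) atTop (𝓝 (β p)))
    (s : ℝ≥0) (p : X) : β p ≤ horo b (γ.1 s) p := by
  refine le_of_tendsto (hβ p) ?_
  filter_upwards [eventually_ge_atTop s] with t ht
  have ht' : (s : ℝ) ≤ t := ht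
  have h1 := dist_triangle (γ.1 t) (γ.1 s) p
  rw [ray_dist, abs_of_nonneg (by linarith)] at h1
  simp only [horo, ContinuousMap.coe_mk, ray_dist_base]
  linarith

/-- `B_γ` is the largest `1`-Lipschitz function for which `γ` is optimal. -/
theorem le_busemann {b : X} {γ : GeodesicRay X b} {β ξ : C(X, ℝ)}
    (hβ : ∀ p : X, Tendsto (fun t : ℝ≥0 => dist (γ.1 t) p - (t : ℝ)) atTop (𝓝 (β p)))
    (hξ : LipschitzWith 1 ξ) (hopt : ∀ t : ℝ≥0, ξ (γ.1 t) = -(t : ℝ)) (p : X) : ξ p ≤ β p := by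
  refine ge_of_tendsto' (hβ p) fun t => ?_
  have h1 := hξ.dist_le_mul p (γ.1 t)
  rw [hopt, Real.dist_eq, dist_comm] at h1
  have h2 := le_abs_self (ξ p - -(t : ℝ))
  simp only [NNReal.coe_one, one_mul] at h1
  linarith

/-! ### Geodesic lines through the basepoint -/

/-- The restriction to `[0, ∞)` of a geodesic line `g` with `g 0 = b`. -/
def lineRay {b : X} (g : C(ℝ, X)) (hg : Isometry g) (h0 : g 0 = b) : GeodesicRay X b :=
  ⟨g.comp ⟨((↑) : ℝ≥0 → ℝ), NNReal.continuous_coe⟩,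
    hg.comp isometry_subtype_coe, by simpa using h0⟩

/-- Through `b` and any `x` there passes a geodesic line. The ray `γ` serves only for `x = b`, where
some nondegenerate geodesic at `b` is needed. -/
theorem exists_line (hU : UniquelyGeodesic X) (hS : Straight X) {b : X} (γ : GeodesicRay X b)
    (x : X) : ∃ g : C(ℝ, X), Isometry g ∧ g 0 = b ∧ g (dist x b) = x := by
  by_cases hx : x = b
  · subst hx
    obtain ⟨g, ⟨hg, he⟩, -⟩ := hS (fun t => γ.1 t.toNNReal) 0 1 one_pos (by
      intro u hu v hv
      rw [ray_dist, Real.coe_toNNReal _ hu.1, Real.coe_toNNReal _ hv.1])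
    have h0 : g 0 = x := by
      rw [he ⟨le_rfl, zero_le_one⟩]
      simpa using γ.2.2
    exact ⟨⟨g, hg.continuous⟩, hg, h0, by simpa using h0⟩
  · obtain ⟨c, ⟨hc, h0, h1⟩, -⟩ := hU b x (Ne.symm hx)
    have hpos : 0 < dist b x := dist_pos.2 (Ne.symm hx)
    obtain ⟨g, ⟨hg, he⟩, -⟩ := hS c 0 (dist b x) hpos hc
    refine ⟨⟨g, hg.continuous⟩, hg, ?_, ?_⟩
    · exact (he ⟨le_rfl, hpos.le⟩).trans h0
    · rw [dist_comm]
      exact (he ⟨hpos.le, le_rfl⟩).trans h1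

/-- If a `1`-Lipschitz function has slope `-1` along a whole line `g` and along a ray `γ`, both
starting at `b`, then `γ` is the positive half of `g`: otherwise `g` followed up to time `0` could
be continued by `γ` to a second geodesic line. -/
theorem eq_of_optimal (hS : Straight X) {b : X} (γ : GeodesicRay X b) {ξ : C(X, ℝ)}
    (hξ : LipschitzWith 1 ξ) (hopt : ∀ t : ℝ≥0, ξ (γ.1 t) = -(t : ℝ))
    (g : C(ℝ, X)) (hg : Isometry g) (h0 : g 0 = b) (hgopt : ∀ t : ℝ, ξ (g t) = -t) :
    lineRay g hg h0 = γ := by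
  let σ : ℝ → X := fun u => if u ≤ 0 then g u else γ.1 u.toNNReal
  have hσξ : ∀ u, ξ (σ u) = -u := by
    intro u
    by_cases hu : u ≤ 0
    · simp only [σ, if_pos hu, hgopt]
    · simp only [σ, if_neg hu, hopt, Real.coe_toNNReal _ (not_le.1 hu).le]
  have hle : ∀ u v, u ≤ v → dist (σ u) (σ v) ≤ v - u := by
    intro u v huv
    by_cases hv : v ≤ 0
    · simp only [σ, if_pos hv, if_pos (huv.trans hv), hg.dist_eq, Real.dist_eq]
      rw [abs_sub_comm, abs_of_nonneg (by linarith)]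
    · have hv' := (not_le.1 hv).le
      by_cases hu : u ≤ 0
      · have h1 := dist_triangle (g u) b (γ.1 v.toNNReal)
        have h2 : dist (g u) b = -u := by
          rw [← h0, hg.dist_eq, Real.dist_eq, sub_zero, abs_of_nonpos hu]
        rw [dist_comm b, ray_dist_base, Real.coe_toNNReal _ hv', h2] at h1
        simp only [σ, if_pos hu, if_neg hv]
        linarith
      · simp only [σ, if_neg hu, if_neg hv, ray_dist, Real.coe_toNNReal _ hv',
          Real.coe_toNNReal _ (not_le.1 hu).le]
        rw [abs_sub_comm, abs_of_nonneg (by linarith)]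
  have hσ : Isometry σ := by
    refine Isometry.of_dist_eq fun u v => le_antisymm ?_ ?_
    · rw [Real.dist_eq]
      rcases le_total u v with h | h
      · rw [abs_sub_comm, abs_of_nonneg (by linarith)]
        exact hle u v h
      · rw [dist_comm, abs_of_nonneg (by linarith)]
        exact hle v u h
    · have := hξ.dist_le_mul (σ u) (σ v)
      rw [hσξ, hσξ, dist_neg_neg] at this
      simpa using this
  have hgσ : (g : ℝ → X) = σ := by
    refine (hS g (-1) 0 (by norm_num) fun u _ v _ => by rw [hg.dist_eq, Real.dist_eq]).unique
      ⟨hg, fun _ _ => rfl⟩ ⟨hσ, fun u hu => ?_⟩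
    simp only [σ, if_pos hu.2]
  apply Subtype.ext
  ext t
  change g (t : ℝ) = γ.1 t
  rcases eq_or_ne t 0 with rfl | ht
  · rw [γ.2.2]
    simpa using h0
  · have : ¬ ((t : ℝ) ≤ 0) := not_le.2 (NNReal.coe_pos.2 (pos_iff_ne_zero.2 ht))
    rw [hgσ]
    simp only [σ, if_neg this, Real.toNNReal_coe]

/-! ### Horofunctions as limits of points escaping to infinity -/

/-- A horofunction is a limit of `h(x)` along an ultrafilter of points `x` that leaves every bounded
set: by properness, a bounded ultrafilter would converge to some `x` and the limit would be `h(x)`. -/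
theorem exists_ultrafilter [ProperSpace X] {b : X} {ξ : C(X, ℝ)} (hξ : ξ ∈ horoboundary b) :
    ∃ F : Ultrafilter X, Tendsto (horo b) F (𝓝 ξ) ∧ Tendsto (fun x => dist x b) F atTop := by
  have hne : (comap (horo b) (𝓝 ξ)).NeBot := by
    rw [comap_neBot_iff]
    intro t ht
    obtain ⟨_, h, x, rfl⟩ := mem_closure_iff_nhds.1 hξ.1 t ht
    exact ⟨x, h⟩
  let F := Ultrafilter.of (comap (horo b) (𝓝 ξ))
  have hF : Tendsto (horo b) F (𝓝 ξ) := tendsto_iff_comap.2 (Ultrafilter.of_le _)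
  refine ⟨F, hF, tendsto_atTop.2 fun R => ?_⟩
  by_contra hR
  have hR' : Metric.closedBall b R ∈ F := by
    filter_upwards [Ultrafilter.eventually_not.2 hR] with x hx
    exact (not_le.1 hx).le
  obtain ⟨x, -, hx⟩ := (isCompact_closedBall b R).ultrafilter_le_nhds F (le_principal_iff.2 hR')
  exact hξ.2 ⟨x, tendsto_nhds_unique (((continuous_horo b).tendsto x).mono_left hx) hF⟩

/-- Continuity of the Busemann points at `γ` forces every horofunction with optimal ray `γ` to be
`B_γ`. -/
theorem eq_busemann_of_continuousAt [ProperSpace X] (hU : UniquelyGeodesic X) (hS : Straight X)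
    {b : X} {Bmap : GeodesicRay X b → C(X, ℝ)}
    (hBmap : ∀ (γ' : GeodesicRay X b) (p : X),
      Tendsto (fun t : ℝ≥0 => dist (γ'.1 t) p - (t : ℝ)) atTop (𝓝 (Bmap γ' p)))
    {γ : GeodesicRay X b} (hc : ContinuousAt Bmap γ) {ξ : C(X, ℝ)} (hξ : ξ ∈ horoboundary b)
    (hopt : ∀ t : ℝ≥0, ξ (γ.1 t) = -(t : ℝ)) : ξ = Bmap γ := by
  obtain ⟨F, hF, hinf⟩ := exists_ultrafilter hξ
  have hlip : LipschitzWith 1 ξ := (closure_horo_subset b hξ.1).1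
  choose g hg h0 hgx using exists_line hU hS γ
  obtain ⟨k, hk, hFk⟩ := (isCompact_lipschitz (0 : ℝ) b).ultrafilter_le_nhds (F.map g)
    (le_principal_iff.2 (Filter.mem_map.2 (Filter.univ_mem' fun x => ⟨(hg x).lipschitz, h0 x⟩)))
  have hgk : Tendsto g F (𝓝 k) := hFk
  have hkiso : Isometry k := Isometry.of_dist_eq fun u v =>
    tendsto_nhds_unique ((tendsto_apply hgk u).dist (tendsto_apply hgk v))
      (by simp only [(hg _).dist_eq]; exact tendsto_const_nhds)
  have hkopt : ∀ t : ℝ, ξ (k t) = -t := by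
    intro t
    -- `h(x) (g_x t) = -t` as soon as `t ≤ d(x, b)`, and `h(x)` is `1`-Lipschitz.
    have hd : Tendsto (fun x => dist (g x t) (k t)) F (𝓝 0) :=
      tendsto_iff_dist_tendsto_zero.1 (tendsto_apply hgk t)
    refine tendsto_nhds_unique (tendsto_apply hF (k t)) (tendsto_iff_dist_tendsto_zero.2 ?_)
    refine squeeze_zero' (Eventually.of_forall fun _ => dist_nonneg) ?_ hd
    filter_upwards [hinf.eventually_ge_atTop t] with x hx
    have h1 : horo b x (g x t) = -t := by
      have h2 : dist x (g x t) = dist x b - t := by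
        have h3 := (hg x).dist_eq (dist x b) t
        rwa [hgx x, Real.dist_eq, abs_of_nonneg (by linarith)] at h3
      simp only [horo, ContinuousMap.coe_mk, h2]
      ring
    rw [← h1, dist_comm (g x t)]
    simpa using (horo_mem b x).1.dist_le_mul (k t) (g x t)
  have hray := eq_of_optimal hS γ hlip hopt k hkiso hk.2 hkopt
  have hlim : Tendsto (fun x => lineRay (g x) (hg x) (h0 x)) F (𝓝 γ) := by
    rw [← hray, tendsto_subtype_rng]
    exact ((ContinuousMap.continuous_precomp _).tendsto k).comp hgk
  have hB : Tendsto (fun x => Bmap (lineRay (g x) (hg x) (h0 x))) F (𝓝 (Bmap γ)) :=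
    hc.tendsto.comp hlim
  ext p
  refine le_antisymm (le_busemann (hBmap γ) hlip hopt p) ?_
  refine le_of_tendsto_of_tendsto' (tendsto_apply hB p) (tendsto_apply hF p) fun x => ?_
  have h1 := busemann_le_horo (hBmap (lineRay (g x) (hg x) (h0 x))) ⟨dist x b, dist_nonneg⟩ p
  have h2 : (lineRay (g x) (hg x) (h0 x)).1 ⟨dist x b, dist_nonneg⟩ = x := hgx x
  rwa [h2] at h1

/-! ### The visual compactification -/

/-- Away from `r = 0` the quotient map is injective and open, so continuity can be tested
before passing to the quotient. -/
theorem continuousAt_of_comp_mk {b : X} {Z : Type*} [TopologicalSpace Z]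
    {B : VisualCompactification X b → Z} {γ : GeodesicRay X b}
    (h : ContinuousAt (fun q => B (Quotient.mk (collapseSetoid X b ℝ≥0∞) q)) (γ, ⊤)) :
    ContinuousAt B (Quotient.mk (collapseSetoid X b ℝ≥0∞) (γ, ⊤)) := by
  intro V hV
  obtain ⟨U, hUV, hUo, hU⟩ := mem_nhds_iff.1 (h hV)
  let W : Set (GeodesicRay X b × ℝ≥0∞) := U ∩ {q | q.2 ≠ 0}
  have hWo : IsOpen W := hUo.inter (isOpen_ne_fun continuous_snd continuous_const)
  have hsat : Quotient.mk (collapseSetoid X b ℝ≥0∞) ⁻¹'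
      (Quotient.mk (collapseSetoid X b ℝ≥0∞) '' W) = W := by
    refine Set.Subset.antisymm ?_ (Set.subset_preimage_image _ _)
    rintro q ⟨w, hw, hwq⟩
    rcases Quotient.exact hwq with h' | h'
    · exact h' ▸ hw
    · exact absurd h'.1 hw.2
  have hopen : IsOpen (Quotient.mk (collapseSetoid X b ℝ≥0∞) '' W) :=
    isQuotientMap_quotient_mk'.isOpen_preimage.1 (by
      change IsOpen (Quotient.mk (collapseSetoid X b ℝ≥0∞) ⁻¹' _)
      rw [hsat]
      exact hWo)
  refine mem_map.2 (mem_of_superset (hopen.mem_nhds ⟨_, ⟨hU, ENNReal.top_ne_zero⟩, rfl⟩) ?_)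
  rintro _ ⟨w, hw, rfl⟩
  exact hUV hw.1

/-- For a geodesic ray `γ` based at `b`, the following are equivalent:
(1) the assignment of Busemann points `D_b → C(X, ℝ)` is continuous at `γ`;
(2) the fiber `Π_b⁻¹ (γ)` (horofunctions for which `γ` is optimal) is the singleton `{B_γ}`;
(3) the Busemann map `B : X̄_b → C(X, ℝ)` is continuous at the boundary point of `γ`. -/
theorem statement13 [ProperSpace X] (hU : UniquelyGeodesic X) (hS : Straight X) (b : X)
    (Bmap : GeodesicRay X b → C(X, ℝ))
    (hBmap : ∀ (γ' : GeodesicRay X b) (p : X),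
      Tendsto (fun t : ℝ≥0 => dist (γ'.1 t) p - (t : ℝ)) atTop (𝓝 (Bmap γ' p)))
    (B : VisualCompactification X b → C(X, ℝ))
    (hBfin : ∀ (γ' : GeodesicRay X b) (r : ℝ≥0),
      B (Quotient.mk (collapseSetoid X b ℝ≥0∞) (γ', (r : ℝ≥0∞))) = horo b (γ'.1 r))
    (hBinf : ∀ γ' : GeodesicRay X b,
      B (Quotient.mk (collapseSetoid X b ℝ≥0∞) (γ', (⊤ : ℝ≥0∞))) = Bmap γ')
    (γ : GeodesicRay X b) :
    (ContinuousAt Bmap γ ↔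
      {ξ : C(X, ℝ) | ξ ∈ horoboundary b ∧ ∀ t : ℝ≥0, ξ (γ.1 t) = -(t : ℝ)} = {Bmap γ}) ∧
    ({ξ : C(X, ℝ) | ξ ∈ horoboundary b ∧ ∀ t : ℝ≥0, ξ (γ.1 t) = -(t : ℝ)} = {Bmap γ} ↔
      ContinuousAt B (Quotient.mk (collapseSetoid X b ℝ≥0∞) (γ, (⊤ : ℝ≥0∞)))) := by
  have hmem : ∀ q : GeodesicRay X b × ℝ≥0∞,
      B (Quotient.mk (collapseSetoid X b ℝ≥0∞) q) ∈ closure (Set.range (horo b)) := by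
    rintro ⟨γ', r⟩
    induction r using ENNReal.recTopCoe with
    | top => rw [hBinf]; exact busemann_mem_closure (hBmap γ')
    | coe r => rw [hBfin]; exact subset_closure ⟨_, rfl⟩
  have hval : ∀ (t : ℝ≥0) (q : GeodesicRay X b × ℝ≥0∞), (t : ℝ≥0∞) ≤ q.2 →
      B (Quotient.mk (collapseSetoid X b ℝ≥0∞) q) (q.1.1 t) = -(t : ℝ) := by
    rintro t ⟨γ', r⟩ htr
    induction r using ENNReal.recTopCoe with
    | top => rw [hBinf]; exact busemann_ray (hBmap γ') t
    | coe r => rw [hBfin]; exact horo_ray γ' (ENNReal.coe_le_coe.1 htr)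
  have h12 : ContinuousAt Bmap γ →
      {ξ : C(X, ℝ) | ξ ∈ horoboundary b ∧ ∀ t : ℝ≥0, ξ (γ.1 t) = -(t : ℝ)} = {Bmap γ} := by
    intro hc
    ext ξ
    simp only [Set.mem_ofPred_eq, Set.mem_singleton_iff]
    constructor
    · rintro ⟨h1, h2⟩
      exact eq_busemann_of_continuousAt hU hS hBmap hc h1 h2
    · rintro rfl
      have h := busemann_ray (hBmap γ)
      exact ⟨⟨busemann_mem_closure (hBmap γ), not_mem_range_horo γ h⟩, h⟩
  have h23 : {ξ : C(X, ℝ) | ξ ∈ horoboundary b ∧ ∀ t : ℝ≥0, ξ (γ.1 t) = -(t : ℝ)} = {Bmap γ} →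
      ContinuousAt B (Quotient.mk (collapseSetoid X b ℝ≥0∞) (γ, (⊤ : ℝ≥0∞))) := by
    intro hfib
    apply continuousAt_of_comp_mk
    rw [ContinuousAt, hBinf, tendsto_iff_ultrafilter]
    intro F hF
    obtain ⟨ξ, -, hFξ⟩ := (isCompact_lipschitz b (0 : ℝ)).ultrafilter_le_nhds
      (F.map fun q => B (Quotient.mk (collapseSetoid X b ℝ≥0∞) q))
      (le_principal_iff.2 (Filter.mem_map.2
        (Filter.univ_mem' fun q => closure_horo_subset b (hmem q))))
    have hlim : Tendsto (fun q => B (Quotient.mk (collapseSetoid X b ℝ≥0∞) q)) F (𝓝 ξ) := hFξ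
    have hξopt : ∀ t : ℝ≥0, ξ (γ.1 t) = -(t : ℝ) := by
      intro t
      have hfst : Tendsto (fun q : GeodesicRay X b × ℝ≥0∞ => q.1.1) F (𝓝 γ.1) :=
        ((continuous_subtype_val.comp continuous_fst).tendsto (γ, (⊤ : ℝ≥0∞))).mono_left hF
      have hd : Tendsto (fun q : GeodesicRay X b × ℝ≥0∞ => dist (q.1.1 t) (γ.1 t)) F (𝓝 0) :=
        tendsto_iff_dist_tendsto_zero.1 (tendsto_apply hfst t)
      have hsnd : Tendsto (fun q : GeodesicRay X b × ℝ≥0∞ => q.2) F (𝓝 ⊤) :=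
        (continuous_snd.tendsto (γ, (⊤ : ℝ≥0∞))).mono_left hF
      refine tendsto_nhds_unique (tendsto_apply hlim (γ.1 t)) (tendsto_iff_dist_tendsto_zero.2 ?_)
      refine squeeze_zero' (Eventually.of_forall fun _ => dist_nonneg) ?_ hd
      filter_upwards [hsnd.eventually (lt_mem_nhds (ENNReal.coe_lt_top (r := t)))] with q hq
      rw [← hval t q hq.le, dist_comm (q.1.1 t)]
      simpa using (closure_horo_subset b (hmem q)).1.dist_le_mul (γ.1 t) (q.1.1 t)
    have hξ : ξ ∈ closure (Set.range (horo b)) :=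
      isClosed_closure.mem_of_tendsto hlim (Eventually.of_forall hmem)
    have : ξ ∈ ({Bmap γ} : Set C(X, ℝ)) :=
      hfib ▸ ⟨⟨hξ, not_mem_range_horo γ hξopt⟩, hξopt⟩
    rw [← Set.mem_singleton_iff.1 this]
    exact hlim
  have h31 : ContinuousAt B (Quotient.mk (collapseSetoid X b ℝ≥0∞) (γ, (⊤ : ℝ≥0∞))) →
      ContinuousAt Bmap γ := by
    intro hc
    have hj : Continuous fun γ' : GeodesicRay X b =>
        Quotient.mk (collapseSetoid X b ℝ≥0∞) (γ', (⊤ : ℝ≥0∞)) :=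
      continuous_quotient_mk'.comp (by fun_prop : Continuous fun γ' : GeodesicRay X b =>
        (γ', (⊤ : ℝ≥0∞)))
    have := ContinuousAt.comp (f := fun γ' : GeodesicRay X b =>
        Quotient.mk (collapseSetoid X b ℝ≥0∞) (γ', (⊤ : ℝ≥0∞))) hc hj.continuousAt
    simpa only [Function.comp_def, hBinf] using this
  exact ⟨⟨h12, fun h => h31 (h23 h)⟩, ⟨h23, fun h => h12 (h31 h)⟩⟩
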